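/- arXiv:2311.01748 — 2 statements merged into one kernel-verified Lean document; each statement's English description precedes it below -/
import Mathlib

section
/- Let 0 < α < 1 and z ≥ max{α, 1 − α}, and let ρ, σ be n×n positive semidefinite complex matrices. Then Q_{α,z}(ρ‖σ) = ⨅_{ε > 0} Q_{α,z}(ρ + ε σ ‖ σ + ε ρ), and moreover Q_{α,z}(ρ + ε σ ‖ σ + ε ρ) converges to Q_{α,z}(ρ‖σ) as ε ↓ 0. -/
open Matrix
open scoped ComplexOrder

/-- Real power of a positive semidefinite matrix via the spectral decomposition,
applying `x ^ t` (real `rpow`, so with the convention `0 ^ t = 0` for `t ≠ 0`)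
to the eigenvalues; returns `0` if the matrix is not Hermitian. -/
noncomputable def mpow {n : Type*} [Fintype n] [DecidableEq n]
    (A : Matrix n n ℂ) (t : ℝ) : Matrix n n ℂ :=
  if hA : A.IsHermitian then
    (hA.eigenvectorUnitary : Matrix n n ℂ) *
      Matrix.diagonal (fun i => ((hA.eigenvalues i ^ t : ℝ) : ℂ)) *
      star (hA.eigenvectorUnitary : Matrix n n ℂ)
  else 0


/-- The α-z-Rényi quantity `Q_{α,z}(ρ‖σ) = Tr((σ^((1−α)/2z) ρ^(α/z) σ^((1−α)/2z))^z)`. -/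
noncomputable def Qaz {n : Type*} [Fintype n] [DecidableEq n]
    (α z : ℝ) (ρ σ : Matrix n n ℂ) : ℝ :=
  ((mpow (mpow σ ((1 - α) / (2 * z)) * mpow ρ (α / z) * mpow σ ((1 - α) / (2 * z))) z).trace).re

/-!
`Q_{α,z}` is continuous on pairs of positive semidefinite matrices and, for `z ≥ max{α, 1 - α}`,
monotone in both arguments, so that `ε ↦ Q_{α,z}(ρ + ετ‖σ + εω)` is increasing and right-continuous
at `0` for all positive semidefinite `τ` and `ω`.

Monotonicity in `ρ`: `x ↦ x ^ (α / z)` is operator monotone because `α / z ≤ 1`, and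
`A ↦ Tr (A ^ z)` is monotone, by the Löwner–Heinz inequality if `z ≤ 1` and by Jensen's inequality
in an eigenbasis of the smaller matrix if `z ≥ 1`. With `X = σ ^ ((1 - α) / 2z) ρ ^ (α / 2z)`, the
identity `Tr ((X X*) ^ z) = Tr ((X* X) ^ z)` reads `Q_{α,z}(ρ‖σ) = Q_{1-α,z}(σ‖ρ)`, which carries
the monotonicity over to `σ`.
-/

section

open Set Filter
open scoped Topology NNReal MatrixOrder Matrix.Norms.L2Operator

section RealPowers

variable {A : Type*} [CStarAlgebra A] [PartialOrder A] [StarOrderedRing A]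

lemma cfc_rpow_add_of_pos (a : A) {x y : ℝ} (hx : 0 < x) (hy : 0 < y) :
    a ^ (x + y) = a ^ x * a ^ y := by
  lift x to ℝ≥0 using hx.le
  lift y to ℝ≥0 using hy.le
  norm_cast at hx hy
  rw [← NNReal.coe_add, ← CFC.nnrpow_eq_rpow hx, ← CFC.nnrpow_eq_rpow hy,
    ← CFC.nnrpow_eq_rpow (add_pos hx hy), CFC.nnrpow_add hx hy]

lemma continuousOn_cfc_rpow_of_pos {t : ℝ} (ht : 0 < t) :
    ContinuousOn (fun a : A => a ^ t) (Ici 0) := by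
  lift t to ℝ≥0 using ht.le
  simpa only [CFC.nnrpow_eq_rpow (NNReal.coe_pos.1 ht)] using!
    CFC.continuousOn_nnrpow (A := A) t

end RealPowers

section TraceInequality

variable {𝕜 n : Type*} [RCLike 𝕜] [Fintype n] {A B : Matrix n n 𝕜}

lemma re_star_dotProduct_mulVec_mono (hAB : A ≤ B) (v : n → 𝕜) :
    RCLike.re (star v ⬝ᵥ A *ᵥ v) ≤ RCLike.re (star v ⬝ᵥ B *ᵥ v) := by
  have h := (Matrix.le_iff.1 hAB).re_dotProduct_nonneg v
  rwa [sub_mulVec, dotProduct_sub, map_sub, sub_nonneg] at h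

lemma sum_star_dotProduct_mulVec_orthonormalBasis {ι : Type*} [Fintype ι]
    (b : OrthonormalBasis ι 𝕜 (EuclideanSpace 𝕜 n)) (A : Matrix n n 𝕜) :
    ∑ i, star ⇑(b i) ⬝ᵥ A *ᵥ ⇑(b i) = A.trace := by
  classical
  calc ∑ i, star ⇑(b i) ⬝ᵥ A *ᵥ ⇑(b i)
      = ∑ i, inner 𝕜 (b i) (A.toEuclideanLin (b i)) := by
        refine Finset.sum_congr rfl fun i _ => ?_
        rw [EuclideanSpace.inner_eq_star_dotProduct, dotProduct_comm, ofLp_toLpLin, toLin'_apply]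
    _ = LinearMap.trace 𝕜 _ A.toEuclideanLin := (LinearMap.trace_eq_sum_inner _ b).symm
    _ = A.trace := by rw [toEuclideanLin_eq_toLin_orthonormal, trace_toLin_eq]

variable [DecidableEq n] {s : Set ℝ} {f : ℝ → ℝ} {v : n → 𝕜}

lemma trace_cfc_eq_sum (hA : A.IsHermitian) (f : ℝ → ℝ) :
    (cfc f A).trace = ∑ i, (f (hA.eigenvalues i) : 𝕜) := by
  rw [hA.cfc_eq, IsHermitian.cfc, Unitary.conjStarAlgAut_apply, trace_mul_cycle,
    Unitary.coe_star_mul_self, Matrix.one_mul, trace_diagonal]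
  rfl

lemma trace_cfc_mul_conjTranspose_self (X : Matrix n n 𝕜) (f : ℝ → ℝ) :
    (cfc f (X * Xᴴ)).trace = (cfc f (Xᴴ * X)).trace := by
  have hX := isHermitian_mul_conjTranspose_self X
  have hX' := isHermitian_conjTranspose_mul_self X
  rw [trace_cfc_eq_sum hX, trace_cfc_eq_sum hX',
    (hX.eigenvalues_eq_eigenvalues_iff hX').2 (charpoly_mul_comm X Xᴴ)]

lemma re_star_dotProduct_cfc_mulVec (hA : A.IsHermitian) (f : ℝ → ℝ) (v : n → 𝕜) :
    RCLike.re (star v ⬝ᵥ cfc f A *ᵥ v) =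
      ∑ i, ‖(star (hA.eigenvectorUnitary : Matrix n n 𝕜) *ᵥ v) i‖ ^ 2 * f (hA.eigenvalues i) := by
  set U := (hA.eigenvectorUnitary : Matrix n n 𝕜)
  set w := star U *ᵥ v with hw
  have hdiag : star v ⬝ᵥ cfc f A *ᵥ v =
      star w ⬝ᵥ diagonal (RCLike.ofReal ∘ f ∘ hA.eigenvalues) *ᵥ w := by
    rw [hA.cfc_eq, IsHermitian.cfc, Unitary.conjStarAlgAut_apply, hw, star_mulVec,
      star_eq_conjTranspose, conjTranspose_conjTranspose, ← mulVec_mulVec, ← mulVec_mulVec,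
      dotProduct_mulVec]
  rw [hdiag, dotProduct, map_sum]
  refine Finset.sum_congr rfl fun i _ => ?_
  rw [mulVec_diagonal, Pi.star_apply, mul_left_comm, RCLike.star_def, RCLike.conj_mul,
    Function.comp_apply, RCLike.re_ofReal_mul, ← RCLike.ofReal_pow, RCLike.ofReal_re, mul_comm,
    Function.comp_apply]

lemma sum_norm_sq_star_eigenvectorUnitary_mulVec (hA : A.IsHermitian) (hv : star v ⬝ᵥ v = 1) :
    ∑ i, ‖(star (hA.eigenvectorUnitary : Matrix n n 𝕜) *ᵥ v) i‖ ^ 2 = 1 := by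
  have h := re_star_dotProduct_cfc_mulVec hA 1 v
  simpa [cfc_one ℝ A hA.isSelfAdjoint, hv] using h.symm

lemma re_star_dotProduct_mulVec_eq_sum (hA : A.IsHermitian) (v : n → 𝕜) :
    RCLike.re (star v ⬝ᵥ A *ᵥ v) =
      ∑ i, ‖(star (hA.eigenvectorUnitary : Matrix n n 𝕜) *ᵥ v) i‖ ^ 2 * hA.eigenvalues i := by
  simpa only [cfc_id ℝ A hA.isSelfAdjoint, id] using re_star_dotProduct_cfc_mulVec hA id v

lemma re_star_dotProduct_mulVec_mem (hA : A.IsHermitian) (hs : Convex ℝ s)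
    (hAs : spectrum ℝ A ⊆ s) (hv : star v ⬝ᵥ v = 1) : RCLike.re (star v ⬝ᵥ A *ᵥ v) ∈ s := by
  rw [re_star_dotProduct_mulVec_eq_sum hA]
  exact hs.sum_mem (fun i _ => sq_nonneg _) (sum_norm_sq_star_eigenvectorUnitary_mulVec hA hv)
    fun i _ => hAs (hA.eigenvalues_mem_spectrum_real i)

lemma map_re_star_dotProduct_mulVec_le_of_convexOn (hf : ConvexOn ℝ s f) (hA : A.IsHermitian)
    (hAs : spectrum ℝ A ⊆ s) (hv : star v ⬝ᵥ v = 1) :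
    f (RCLike.re (star v ⬝ᵥ A *ᵥ v)) ≤ RCLike.re (star v ⬝ᵥ cfc f A *ᵥ v) := by
  rw [re_star_dotProduct_mulVec_eq_sum hA, re_star_dotProduct_cfc_mulVec hA]
  exact hf.map_sum_le (fun i _ => sq_nonneg _) (sum_norm_sq_star_eigenvectorUnitary_mulVec hA hv)
    fun i _ => hAs (hA.eigenvalues_mem_spectrum_real i)

lemma re_trace_cfc_le_re_trace_cfc (hf : ConvexOn ℝ s f) (hmono : MonotoneOn f s)
    (hA : A.IsHermitian) (hB : B.IsHermitian) (hAs : spectrum ℝ A ⊆ s) (hBs : spectrum ℝ B ⊆ s)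
    (hAB : A ≤ B) : RCLike.re (cfc f A).trace ≤ RCLike.re (cfc f B).trace := by
  let u (i : n) : n → 𝕜 := hA.eigenvectorBasis i
  have hu (i : n) : star (u i) ⬝ᵥ u i = 1 := by
    rw [dotProduct_comm, ← EuclideanSpace.inner_eq_star_dotProduct]
    exact hA.eigenvectorBasis.inner_eq_one i
  calc RCLike.re (cfc f A).trace
      = ∑ i, f (hA.eigenvalues i) := by
        rw [trace_cfc_eq_sum hA, map_sum]
        simp only [RCLike.ofReal_re]
    _ ≤ ∑ i, f (RCLike.re (star (u i) ⬝ᵥ B *ᵥ u i)) := by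
        refine Finset.sum_le_sum fun i _ =>
          hmono (hAs (hA.eigenvalues_mem_spectrum_real i))
            (re_star_dotProduct_mulVec_mem hB hf.1 hBs (hu i)) ?_
        rw [hA.eigenvalues_eq]
        exact re_star_dotProduct_mulVec_mono hAB (u i)
    _ ≤ ∑ i, RCLike.re (star (u i) ⬝ᵥ cfc f B *ᵥ u i) :=
        Finset.sum_le_sum fun i _ => map_re_star_dotProduct_mulVec_le_of_convexOn hf hB hBs (hu i)
    _ = RCLike.re (cfc f B).trace := by
        rw [← map_sum, sum_star_dotProduct_mulVec_orthonormalBasis]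

end TraceInequality

section Renyi

variable {n : Type*} [Fintype n] [DecidableEq n] {A B ρ σ ρ' σ' : Matrix n n ℂ} {α z t : ℝ}

lemma re_trace_rpow_le_re_trace_rpow (hA : 0 ≤ A) (hAB : A ≤ B) (ht : 0 ≤ t) :
    (A ^ t).trace.re ≤ (B ^ t).trace.re := by
  rcases le_total t 1 with ht1 | ht1
  · exact Complex.re_le_re
      (OrderHomClass.mono (tracePositiveLinearMap n ℂ ℂ) (CFC.rpow_le_rpow ⟨ht, ht1⟩ hAB))
  · have hB := hA.trans hAB
    rw [CFC.rpow_eq_cfc_real hA, CFC.rpow_eq_cfc_real hB]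
    exact re_trace_cfc_le_re_trace_cfc (convexOn_rpow ht1)
      (Real.monotoneOn_rpow_Ici_of_exponent_nonneg ht) hA.posSemidef.1 hB.posSemidef.1
      (fun _ hx => spectrum_nonneg_of_nonneg hA hx)
      (fun _ hx => spectrum_nonneg_of_nonneg hB hx) hAB

lemma mpow_eq_rpow (hA : 0 ≤ A) (t : ℝ) : mpow A t = A ^ t := by
  have hA' : A.IsHermitian := hA.posSemidef.1
  rw [CFC.rpow_eq_cfc_real hA, hA'.cfc_eq, IsHermitian.cfc, mpow, dif_pos hA',
    Unitary.conjStarAlgAut_apply]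
  rfl

lemma Qaz_eq_re_trace_rpow (α z : ℝ) (hρ : 0 ≤ ρ) (hσ : 0 ≤ σ) :
    Qaz α z ρ σ =
      ((σ ^ ((1 - α) / (2 * z)) * ρ ^ (α / z) * σ ^ ((1 - α) / (2 * z))) ^ z).trace.re := by
  rw [Qaz, mpow_eq_rpow hρ, mpow_eq_rpow hσ, mpow_eq_rpow]
  exact conjugate_nonneg_of_nonneg CFC.rpow_nonneg CFC.rpow_nonneg

lemma Qaz_swap (hα0 : 0 < α) (hα1 : α < 1) (hz : 0 < z) (hρ : 0 ≤ ρ) (hσ : 0 ≤ σ) :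
    Qaz α z ρ σ = Qaz (1 - α) z σ ρ := by
  have hα1' : 0 < 1 - α := sub_pos.2 hα1
  have hsplit (C : Matrix n n ℂ) {x : ℝ} (hx : 0 < x) :
      C ^ (x / z) = C ^ (x / (2 * z)) * C ^ (x / (2 * z)) := by
    rw [← cfc_rpow_add_of_pos C (by positivity) (by positivity)]
    congr 1
    field_simp
    norm_num
  set X := σ ^ ((1 - α) / (2 * z)) * ρ ^ (α / (2 * z)) with hX
  have hXs : Xᴴ = ρ ^ (α / (2 * z)) * σ ^ ((1 - α) / (2 * z)) := by
    rw [conjTranspose_mul, CFC.rpow_nonneg.posSemidef.1.eq, CFC.rpow_nonneg.posSemidef.1.eq]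
  have hXX : σ ^ ((1 - α) / (2 * z)) * ρ ^ (α / z) * σ ^ ((1 - α) / (2 * z)) = X * Xᴴ := by
    rw [hXs, hX, hsplit ρ hα0]
    simp only [Matrix.mul_assoc]
  have hXX' : ρ ^ (α / (2 * z)) * σ ^ ((1 - α) / z) * ρ ^ (α / (2 * z)) = Xᴴ * X := by
    rw [hXs, hX, hsplit σ hα1']
    simp only [Matrix.mul_assoc]
  rw [Qaz_eq_re_trace_rpow α z hρ hσ, Qaz_eq_re_trace_rpow (1 - α) z hσ hρ, sub_sub_cancel, hXX,
    hXX', CFC.rpow_eq_cfc_real (posSemidef_self_mul_conjTranspose X).nonneg,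
    CFC.rpow_eq_cfc_real (posSemidef_conjTranspose_mul_self X).nonneg,
    trace_cfc_mul_conjTranspose_self]

lemma Qaz_le_Qaz_left (hα : 0 ≤ α) (hz : α ≤ z) (hρ : 0 ≤ ρ) (hσ : 0 ≤ σ) (hρρ' : ρ ≤ ρ') :
    Qaz α z ρ σ ≤ Qaz α z ρ' σ := by
  have hz0 : 0 ≤ z := hα.trans hz
  rw [Qaz_eq_re_trace_rpow α z hρ hσ, Qaz_eq_re_trace_rpow α z (hρ.trans hρρ') hσ]
  refine re_trace_rpow_le_re_trace_rpow ?_ ?_ hz0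
  · exact conjugate_nonneg_of_nonneg CFC.rpow_nonneg CFC.rpow_nonneg
  · exact conjugate_le_conjugate_of_nonneg
      (CFC.rpow_le_rpow ⟨div_nonneg hα hz0, div_le_one_of_le₀ hz hz0⟩ hρρ') CFC.rpow_nonneg

lemma Qaz_le_Qaz (hα0 : 0 < α) (hα1 : α < 1) (hz : max α (1 - α) ≤ z) (hρ : 0 ≤ ρ)
    (hσ : 0 ≤ σ) (hρρ' : ρ ≤ ρ') (hσσ' : σ ≤ σ') : Qaz α z ρ σ ≤ Qaz α z ρ' σ' := by
  obtain ⟨hαz, hαz'⟩ := max_le_iff.1 hz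
  have hz0 : 0 < z := hα0.trans_le hαz
  have hρ' := hρ.trans hρρ'
  calc Qaz α z ρ σ
      ≤ Qaz α z ρ' σ := Qaz_le_Qaz_left hα0.le hαz hρ hσ hρρ'
    _ = Qaz (1 - α) z σ ρ' := Qaz_swap hα0 hα1 hz0 hρ' hσ
    _ ≤ Qaz (1 - α) z σ' ρ' := Qaz_le_Qaz_left (sub_nonneg.2 hα1.le) hαz' hσ hρ' hσσ'
    _ = Qaz α z ρ' σ' := (Qaz_swap hα0 hα1 hz0 hρ' (hσ.trans hσσ')).symm

lemma continuousOn_Qaz (hα0 : 0 < α) (hα1 : α < 1) (hz : 0 < z) :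
    ContinuousOn (fun p : Matrix n n ℂ × Matrix n n ℂ => Qaz α z p.1 p.2) (Ici 0 ×ˢ Ici 0) := by
  have hρ : ContinuousOn (fun p : Matrix n n ℂ × Matrix n n ℂ => p.1 ^ (α / z)) (Ici 0 ×ˢ Ici 0) :=
    (continuousOn_cfc_rpow_of_pos (by positivity)).comp continuousOn_fst fun p hp => hp.1
  have hσ : ContinuousOn (fun p : Matrix n n ℂ × Matrix n n ℂ => p.2 ^ ((1 - α) / (2 * z)))
      (Ici 0 ×ˢ Ici 0) :=
    (continuousOn_cfc_rpow_of_pos (div_pos (sub_pos.2 hα1) (by positivity))).comp continuousOn_snd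
      fun p hp => hp.2
  have hpow := (continuousOn_cfc_rpow_of_pos hz).comp ((hσ.mul hρ).mul hσ)
    fun p _ => conjugate_nonneg_of_nonneg CFC.rpow_nonneg CFC.rpow_nonneg
  have htrace : Continuous fun C : Matrix n n ℂ => C.trace.re :=
    Complex.continuous_re.comp continuous_id.matrix_trace
  exact (htrace.comp_continuousOn hpow).congr fun p hp => Qaz_eq_re_trace_rpow α z hp.1 hp.2

theorem Qaz_eq_iInf_perturb_general (hα0 : 0 < α) (hα1 : α < 1) (hz : max α (1 - α) ≤ z)
    {τ ω : Matrix n n ℂ} (hρ : ρ.PosSemidef) (hσ : σ.PosSemidef) (hτ : τ.PosSemidef)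
    (hω : ω.PosSemidef) :
    Qaz α z ρ σ = ⨅ ε : {x : ℝ // 0 < x}, Qaz α z (ρ + (ε : ℝ) • τ) (σ + (ε : ℝ) • ω) ∧
    Tendsto (fun ε : ℝ => Qaz α z (ρ + ε • τ) (σ + ε • ω)) (𝓝[>] 0) (𝓝 (Qaz α z ρ σ)) := by
  let q : ℝ → ℝ := fun ε => Qaz α z (ρ + ε • τ) (σ + ε • ω)
  have hpos {C D : Matrix n n ℂ} (hC : C.PosSemidef) (hD : D.PosSemidef) {ε : ℝ} (hε : 0 ≤ ε) :
      0 ≤ C + ε • D := (hC.add (hD.smul hε)).nonneg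
  have hmono : MonotoneOn q (Ici 0) := fun ε hε δ _ hεδ =>
    Qaz_le_Qaz hα0 hα1 hz (hpos hρ hτ hε) (hpos hσ hω hε)
      (by gcongr; exact hτ.nonneg) (by gcongr; exact hω.nonneg)
  have hcont : ContinuousOn q (Ici 0) := by
    refine (continuousOn_Qaz hα0 hα1 (hα0.trans_le (max_le_iff.1 hz).1)).comp
      (f := fun ε : ℝ => (ρ + ε • τ, σ + ε • ω)) (by fun_prop) fun ε hε => ?_
    exact ⟨hpos hρ hτ hε, hpos hσ hω hε⟩
  have hq0 : q 0 = Qaz α z ρ σ := by simp only [q, zero_smul, add_zero]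
  have hlim : Tendsto q (𝓝[>] 0) (𝓝 (Qaz α z ρ σ)) :=
    hq0 ▸ (hcont 0 self_mem_Ici).mono_left (nhdsWithin_mono 0 Ioi_subset_Ici_self)
  have hbdd : BddBelow (q '' Ioi 0) :=
    ⟨q 0, forall_mem_image.2 fun ε hε => hmono self_mem_Ici (Ioi_subset_Ici_self hε) hε.le⟩
  refine ⟨?_, hlim⟩
  exact (tendsto_nhds_unique hlim ((hmono.mono Ioi_subset_Ici_self).tendsto_nhdsGT hbdd)).trans
    sInf_image'

end Renyi

end

/-- For `0 < α < 1` and `z ≥ max{α, 1−α}`: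
`Q_{α,z}(ρ‖σ) = ⨅_{ε>0} Q_{α,z}(ρ + εσ‖σ + ερ)`, and
`Q_{α,z}(ρ + εσ‖σ + ερ) → Q_{α,z}(ρ‖σ)` as `ε ↓ 0`. -/
theorem Qaz_eq_iInf_perturb (n : ℕ) (α z : ℝ) (hα0 : 0 < α) (hα1 : α < 1)
    (hz : max α (1 - α) ≤ z)
    (ρ σ : Matrix (Fin n) (Fin n) ℂ) (hρ : ρ.PosSemidef) (hσ : σ.PosSemidef) :
    Qaz α z ρ σ = ⨅ ε : {x : ℝ // 0 < x}, Qaz α z (ρ + (ε : ℝ) • σ) (σ + (ε : ℝ) • ρ) ∧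
    Filter.Tendsto (fun ε : ℝ => Qaz α z (ρ + ε • σ) (σ + ε • ρ))
      (nhdsWithin 0 (Set.Ioi 0)) (nhds (Qaz α z ρ σ)) :=
  Qaz_eq_iInf_perturb_general hα0 hα1 hz hρ hσ hσ hρ
end

section
/- Let 0 < α < 1 and z > 0, and let ρ, σ be n×n positive semidefinite complex matrices. Then for every positive definite n×n complex matrix a, Q_{α,z}(ρ‖σ) ≤ α · Tr((a^{1/2} ρ^{α/z} a^{1/2})^{z/α}) + (1 − α) · Tr((a^{−1/2} σ^{(1−α)/z} a^{−1/2})^{z/(1−α)}), where a^{−1/2} is the inverse of the positive definite square root of a. -/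
open Matrix
open scoped ComplexOrder

/-!
Put `X = ρ^(α/2z) a^(1/2)` and `Y = a^(-1/2) σ^((1-α)/2z)`, so that `X Y` no longer involves `a` and
the claim is a Young inequality `Tr |X Y|^(2z) ≤ α Tr |X|^(2z/α) + (1 - α) Tr |Y|^(2z/(1-α))`.
No exponent need exceed `1`, so norm and duality arguments are unavailable. Instead, iterate `QR`:
factor `Y U = V R` and then `X V = W S`, so that `X Y U = W (S R)` with `S R` upper triangular and
diagonal entries `S i i * R i i`. If the columns of `U` are the right singular vectors of `X Y`,
ordered by decreasing singular value, then `S R` is diagonal, carries the singular values, and the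
scalar Young inequality applies entrywise. It remains to bound `∑ |R i i|^(2p)` by `Tr |Y|^(2p)`
(Weyl's inequality). For `p ≥ 1` this is Jensen's inequality; for smaller `p` write `Y`, up to
unitaries, as the square of a diagonal matrix and apply the multiplicative step to double `p`.
-/

section Triangular

variable {m n 𝕜 : Type*} [RCLike 𝕜] [Fintype m]

theorem conjTranspose_mul_self_apply_self (M : Matrix m n 𝕜) (j : n) :
    (Mᴴ * M) j j = ((∑ i, ‖M i j‖ ^ 2 : ℝ) : 𝕜) := by
  simp [mul_apply, RCLike.conj_mul]

theorem conjTranspose_mul_self_unitary_mul [DecidableEq m] (U : unitaryGroup m 𝕜)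
    (M : Matrix m n 𝕜) :
    ((U : Matrix m m 𝕜) * M)ᴴ * ((U : Matrix m m 𝕜) * M) = Mᴴ * M := by
  rw [conjTranspose_mul, Matrix.mul_assoc, ← Matrix.mul_assoc _ _ M, ← star_eq_conjTranspose,
    UnitaryGroup.star_mul_self, Matrix.one_mul]

variable [Fintype n]

theorem sum_norm_sq_col_unitary [DecidableEq n] (U : unitaryGroup n 𝕜) (j : n) :
    ∑ i, ‖U i j‖ ^ 2 = 1 := by
  have h := conjTranspose_mul_self_apply_self (U : Matrix n n 𝕜) j
  rw [← star_eq_conjTranspose, UnitaryGroup.star_mul_self, one_apply_eq] at h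
  exact_mod_cast h.symm

theorem sum_norm_sq_row_unitary [DecidableEq n] (U : unitaryGroup n 𝕜) (i : n) :
    ∑ j, ‖U i j‖ ^ 2 = 1 := by
  simpa [star_apply] using sum_norm_sq_col_unitary U⁻¹ i

variable [LinearOrder n]

theorem exists_eq_unitary_mul_isUpperTriangular (M : Matrix n n 𝕜) :
    ∃ (Q : unitaryGroup n 𝕜) (R : Matrix n n 𝕜), R.IsUpperTriangular ∧ M = Q * R := by
  let _ : LocallyFiniteOrderBot n := .ofIic' n (fun a ↦ {x | x ≤ a}) (by simp)
  let f (j : n) : EuclideanSpace 𝕜 n := WithLp.toLp 2 (M.col j)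
  let e := EuclideanSpace.basisFun n 𝕜
  let b := InnerProductSpace.gramSchmidtOrthonormalBasis finrank_euclideanSpace f
  refine ⟨⟨_, e.toMatrix_orthonormalBasis_mem_unitary b⟩, b.toBasis.toMatrix f,
    InnerProductSpace.gramSchmidtOrthonormalBasis_inv_isUpperTriangular _ f, ?_⟩
  have h := e.toBasis.toMatrix_mul_toMatrix b.toBasis f
  rw [b.coe_toBasis] at h
  exact h.symm

theorem mul_apply_self_of_isUpperTriangular {R S : Matrix n n 𝕜} (hR : R.IsUpperTriangular)
    (hS : S.IsUpperTriangular) (i : n) : (R * S) i i = R i i * S i i := by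
  rw [mul_apply]
  refine Fintype.sum_eq_single i fun k hk ↦ ?_
  rcases hk.lt_or_gt with hki | hik
  · rw [hR hki, zero_mul]
  · rw [hS hik, mul_zero]

/- Sorting places the zero columns last, which excludes `!![0, 1; 0, 0]`: its columns are orthogonal
and it is upper triangular, but not diagonal. -/
theorem isDiag_of_conjTranspose_mul_self_eq_diagonal {R : Matrix n n 𝕜}
    (hR : R.IsUpperTriangular) {d : n → ℝ} (hd : Antitone d)
    (h : Rᴴ * R = diagonal fun i ↦ (d i : 𝕜)) : R.IsDiag := by
  have sum_col (j : n) : ∑ i, ‖R i j‖ ^ 2 = d j := by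
    have hj := conjTranspose_mul_self_apply_self R j
    rw [h, diagonal_apply_eq] at hj
    exact_mod_cast hj.symm
  suffices col_eq_zero : ∀ j i, i ≠ j → R i j = 0 from fun i j hij ↦ col_eq_zero j i hij
  intro j
  induction j using WellFoundedLT.induction with
  | ind j ih =>
  intro i hij
  rcases hij.lt_or_gt with hlt | hgt
  · by_cases hii : R i i = 0
    · have hdi : d i = 0 := by
        rw [← sum_col i]
        refine Finset.sum_eq_zero fun k _ ↦ ?_
        rcases eq_or_ne k i with rfl | hk
        · simp [hii]
        · simp [ih i hlt k hk]
      have hle : ‖R i j‖ ^ 2 ≤ 0 := calc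
        ‖R i j‖ ^ 2 ≤ ∑ k, ‖R k j‖ ^ 2 :=
          Finset.single_le_sum (f := fun k ↦ ‖R k j‖ ^ 2) (fun _ _ ↦ by positivity)
            (Finset.mem_univ i)
        _ ≤ 0 := by rw [sum_col, ← hdi]; exact hd hlt.le
      simpa using hle.antisymm (by positivity)
    · have hinner : (Rᴴ * R) i j = star (R i i) * R i j := by
        rw [mul_apply]
        exact Fintype.sum_eq_single i fun k hk ↦ by simp [ih i hlt k hk]
      rw [h, diagonal_apply_ne _ hij] at hinner
      exact (mul_eq_zero.1 hinner.symm).resolve_left (star_ne_zero.2 hii)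
  · exact hR hgt

theorem exists_perm_antitone_comp {ι α : Type*} [Finite ι] [LinearOrder ι] [LinearOrder α]
    (f : ι → α) : ∃ s : Equiv.Perm ι, Antitone (f ∘ s) := by
  have := Fintype.ofFinite ι
  let e := monoEquivOfFin ι rfl
  let t := Tuple.sort (OrderDual.toDual ∘ f ∘ e)
  refine ⟨e.symm.toEquiv.trans (t.trans e.toEquiv), fun i j hij ↦ ?_⟩
  exact Tuple.monotone_sort (OrderDual.toDual ∘ f ∘ e) (e.symm.monotone hij)

theorem exists_unitary_conj_eq_diagonal_antitone {A : Matrix n n 𝕜} (hA : A.IsHermitian) :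
    ∃ (U : unitaryGroup n 𝕜) (d : n → ℝ), Antitone d ∧
      (U : Matrix n n 𝕜)ᴴ * A * U = diagonal fun i ↦ (d i : 𝕜) := by
  obtain ⟨s, hs⟩ := exists_perm_antitone_comp hA.eigenvalues
  let V : Matrix n n 𝕜 := hA.eigenvectorUnitary
  have conj_submatrix (B : Matrix n n 𝕜) :
      (V.submatrix id s)ᴴ * B * V.submatrix id s = (Vᴴ * B * V).submatrix s s := rfl
  refine ⟨⟨V.submatrix id s, mem_unitaryGroup_iff'.2 ?_⟩, hA.eigenvalues ∘ s, hs, ?_⟩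
  · have h := conj_submatrix 1
    rwa [Matrix.mul_one, Matrix.mul_one, ← star_eq_conjTranspose V, UnitaryGroup.star_mul_self,
      submatrix_one_equiv] at h
  · have h := hA.conjStarAlgAut_star_eigenvectorUnitary
    rw [Unitary.conjStarAlgAut_star_apply] at h
    rw [conj_submatrix, ← star_eq_conjTranspose, h, submatrix_diagonal_equiv]
    rfl

theorem exists_unitary_forall_isDiag (X : Matrix n n 𝕜) :
    ∃ U : unitaryGroup n 𝕜, ∀ (V : unitaryGroup n 𝕜) (R : Matrix n n 𝕜),
      R.IsUpperTriangular → X * U = V * R → R.IsDiag := by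
  obtain ⟨U, d, hd, hU⟩ :=
    exists_unitary_conj_eq_diagonal_antitone (isHermitian_conjTranspose_mul_self X)
  refine ⟨U, fun V R hR h ↦ isDiag_of_conjTranspose_mul_self_eq_diagonal hR hd ?_⟩
  rw [← conjTranspose_mul_self_unitary_mul V, ← h, ← hU, conjTranspose_mul]
  simp only [Matrix.mul_assoc]

end Triangular

section RealPower

variable {n : Type*} [Fintype n] [DecidableEq n] {A : Matrix n n ℂ}

theorem mpow_eq_cfc (A : Matrix n n ℂ) (t : ℝ) : mpow A t = cfc (fun x : ℝ ↦ x ^ t) A := by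
  by_cases hA : A.IsHermitian
  · rw [mpow, dif_pos hA, hA.cfc_eq, IsHermitian.cfc, Unitary.conjStarAlgAut_apply]
    rfl
  · rw [mpow, dif_neg hA]
    exact (cfc_apply_of_not_predicate A hA).symm

theorem isHermitian_mpow (A : Matrix n n ℂ) (t : ℝ) : (mpow A t).IsHermitian := by
  rw [mpow_eq_cfc]
  exact cfc_predicate _ A

theorem mpow_half_mul_mpow_half (hA : A.PosSemidef) (t : ℝ) :
    mpow A (t / 2) * mpow A (t / 2) = mpow A t := by
  have hcont : ContinuousOn (fun x : ℝ ↦ x ^ (t / 2)) (spectrum ℝ A) :=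
    A.finite_real_spectrum.continuousOn _
  simp only [mpow_eq_cfc]
  rw [← cfc_mul _ _ A hcont hcont]
  refine cfc_congr fun x hx ↦ ?_
  rw [hA.1.spectrum_real_eq_range_eigenvalues] at hx
  obtain ⟨i, rfl⟩ := hx
  rw [← sq, ← Real.rpow_two, ← Real.rpow_mul (hA.eigenvalues_nonneg i),
    div_mul_cancel₀ t two_ne_zero]

theorem isUnit_mpow (hA : A.PosDef) (t : ℝ) : IsUnit (mpow A t) := by
  rw [mpow_eq_cfc]
  refine (isUnit_cfc_iff _ A (A.finite_real_spectrum.continuousOn _) hA.1).2 fun x hx ↦ ?_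
  rw [hA.1.spectrum_real_eq_range_eigenvalues] at hx
  obtain ⟨i, rfl⟩ := hx
  exact (Real.rpow_pos_of_pos (hA.eigenvalues_pos i) t).ne'

theorem trace_mpow_eq_sum_roots_charpoly (hA : A.IsHermitian) (t : ℝ) :
    (mpow A t).trace.re = (A.charpoly.roots.map fun x ↦ x.re ^ t).sum := by
  rw [mpow, dif_pos hA, trace_mul_comm, ← Matrix.mul_assoc, Unitary.coe_star_mul_self,
    Matrix.one_mul, trace_diagonal, hA.roots_charpoly_eq_eigenvalues, Multiset.map_map,
    ← Complex.ofReal_sum, Complex.ofReal_re]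
  rfl

theorem trace_mpow_conjTranspose_mul_self_comm (X : Matrix n n ℂ) (t : ℝ) :
    (mpow (Xᴴ * X) t).trace.re = (mpow (X * Xᴴ) t).trace.re := by
  rw [trace_mpow_eq_sum_roots_charpoly (isHermitian_conjTranspose_mul_self X),
    trace_mpow_eq_sum_roots_charpoly (isHermitian_mul_conjTranspose_self X), charpoly_mul_comm]

theorem trace_mpow_conjTranspose_mul_self_of_isDiag {X D : Matrix n n ℂ} {U V : unitaryGroup n ℂ}
    (hD : D.IsDiag) (h : X * U = V * D) (t : ℝ) :
    (mpow (Xᴴ * X) t).trace.re = ∑ i, (‖D i i‖ ^ 2) ^ t := by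
  have hgram : Dᴴ * D = diagonal fun i ↦ ((‖D i i‖ ^ 2 : ℝ) : ℂ) := by
    rw [← hD.diagonal_diag, diagonal_conjTranspose, diagonal_mul_diagonal]
    simp [Complex.conj_mul']
  have hcharpoly : (Xᴴ * X).charpoly = (Dᴴ * D).charpoly := by
    have hU : (U : Matrix n n ℂ) * (U : Matrix n n ℂ)ᴴ = 1 := mem_unitaryGroup_iff.1 U.2
    rw [← conjTranspose_mul_self_unitary_mul V D, ← h, conjTranspose_mul, Matrix.mul_assoc,
      charpoly_mul_comm (U : Matrix n n ℂ)ᴴ, Matrix.mul_assoc, Matrix.mul_assoc, hU, Matrix.mul_one]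
  rw [trace_mpow_eq_sum_roots_charpoly (isHermitian_conjTranspose_mul_self X), hcharpoly, hgram,
    charpoly_diagonal,
    Polynomial.roots_prod _ _ (Finset.prod_ne_zero_iff.2 fun i _ ↦ Polynomial.X_sub_C_ne_zero _)]
  simp only [Polynomial.roots_X_sub_C, Multiset.bind_singleton, Multiset.map_map]
  rfl

end RealPower

/-- The quantitative `QR` property of `X`: along every orthonormal frame `U`, the matrix `X` has a
factorization `X U = V R` with `V` unitary and `R` upper triangular such that `∑ |R i i| ^ (2 p)` is
at most `c`. The factorization is existentially quantified because for singular `X` the moduli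
`|R i i|` depend on its choice. -/
def QRDiagBound {n 𝕜 : Type*} [RCLike 𝕜] [Fintype n] [LinearOrder n] (X : Matrix n n 𝕜)
    (p c : ℝ) : Prop :=
  ∀ U : unitaryGroup n 𝕜, ∃ (V : unitaryGroup n 𝕜) (R : Matrix n n 𝕜),
    R.IsUpperTriangular ∧ X * U = V * R ∧ ∑ i, (‖R i i‖ ^ 2) ^ p ≤ c

theorem mul_rpow_le_weighted_add {α x y : ℝ} (hα0 : 0 < α) (hα1 : α < 1) (hx : 0 ≤ x) (hy : 0 ≤ y)
    (z : ℝ) : (x * y) ^ z ≤ α * x ^ (z / α) + (1 - α) * y ^ (z / (1 - α)) := by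
  have hα1' : 0 < 1 - α := sub_pos.2 hα1
  have h := Real.geom_mean_le_arith_mean2_weighted hα0.le hα1'.le (Real.rpow_nonneg hx (z / α))
    (Real.rpow_nonneg hy (z / (1 - α))) (add_sub_cancel α 1)
  rwa [← Real.rpow_mul hx, ← Real.rpow_mul hy, div_mul_cancel₀ _ hα0.ne',
    div_mul_cancel₀ _ hα1'.ne', ← Real.mul_rpow hx hy] at h

namespace QRDiagBound

variable {n 𝕜 : Type*} [RCLike 𝕜] [Fintype n] [LinearOrder n]

theorem mul {X Y : Matrix n n 𝕜} {α z c c' : ℝ} (hα0 : 0 < α) (hα1 : α < 1)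
    (hX : QRDiagBound X (z / α) c) (hY : QRDiagBound Y (z / (1 - α)) c') :
    QRDiagBound (X * Y) z (α * c + (1 - α) * c') := by
  intro U
  obtain ⟨V, R, hR, hYU, hRc⟩ := hY U
  obtain ⟨W, S, hS, hXV, hSc⟩ := hX V
  refine ⟨W, S * R, hS.mul hR, ?_, ?_⟩
  · rw [Matrix.mul_assoc, hYU, ← Matrix.mul_assoc, hXV, Matrix.mul_assoc]
  · calc ∑ i, (‖(S * R) i i‖ ^ 2) ^ z
        ≤ ∑ i, (α * (‖S i i‖ ^ 2) ^ (z / α) + (1 - α) * (‖R i i‖ ^ 2) ^ (z / (1 - α))) := by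
          gcongr with i
          rw [mul_apply_self_of_isUpperTriangular hS hR, norm_mul, mul_pow]
          exact mul_rpow_le_weighted_add hα0 hα1 (by positivity) (by positivity) z
      _ = α * ∑ i, (‖S i i‖ ^ 2) ^ (z / α)
            + (1 - α) * ∑ i, (‖R i i‖ ^ 2) ^ (z / (1 - α)) := by
          rw [Finset.sum_add_distrib, Finset.mul_sum, Finset.mul_sum]
      _ ≤ α * c + (1 - α) * c' := by
          have := sub_nonneg.2 hα1.le
          gcongr

theorem mul_self {X : Matrix n n 𝕜} {p c : ℝ} (hX : QRDiagBound X (2 * p) c) :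
    QRDiagBound (X * X) p c := by
  have hp : p / (1 / 2) = 2 * p := by ring
  have hp' : p / (1 - 1 / 2) = 2 * p := by ring
  have h := mul (X := X) (Y := X) (α := 1 / 2) (z := p) (c := c) (c' := c) one_half_pos
    one_half_lt_one (by rwa [hp]) (by rwa [hp'])
  rwa [← add_mul, add_sub_cancel, one_mul] at h

theorem unitary_mul_mul_unitary {X : Matrix n n 𝕜} {p c : ℝ} (hX : QRDiagBound X p c)
    (U V : unitaryGroup n 𝕜) : QRDiagBound (U * X * V : Matrix n n 𝕜) p c := by
  intro W
  obtain ⟨W', R, hR, hXW, hRc⟩ := hX (V * W)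
  refine ⟨U * W', R, hR, ?_, hRc⟩
  rw [Matrix.mul_assoc, Matrix.mul_assoc, ← UnitaryGroup.mul_val, hXW, UnitaryGroup.mul_val,
    Matrix.mul_assoc]

theorem diagonal_of_one_le (g : n → 𝕜) {p : ℝ} (hp : 1 ≤ p) :
    QRDiagBound (diagonal g) p (∑ i, (‖g i‖ ^ 2) ^ p) := by
  intro U
  obtain ⟨Q, R, hR, hQR⟩ :=
    exists_eq_unitary_mul_isUpperTriangular (diagonal g * (U : Matrix n n 𝕜))
  refine ⟨Q, R, hR, hQR, ?_⟩
  have sum_col (i : n) : ∑ k, ‖R k i‖ ^ 2 = ∑ k, ‖U k i‖ ^ 2 * ‖g k‖ ^ 2 := by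
    have h := conjTranspose_mul_self_apply_self R i
    rw [← conjTranspose_mul_self_unitary_mul Q, ← hQR, conjTranspose_mul_self_apply_self] at h
    simpa [diagonal_mul, mul_pow, mul_comm] using (RCLike.ofReal_injective h).symm
  have norm_sq_diag_le (i : n) : ‖R i i‖ ^ 2 ≤ ∑ k, ‖U k i‖ ^ 2 * ‖g k‖ ^ 2 := by
    rw [← sum_col]
    exact Finset.single_le_sum (f := fun k ↦ ‖R k i‖ ^ 2) (fun _ _ ↦ by positivity)
      (Finset.mem_univ i)
  calc ∑ i, (‖R i i‖ ^ 2) ^ p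
      ≤ ∑ i, (∑ k, ‖U k i‖ ^ 2 * ‖g k‖ ^ 2) ^ p := by
        gcongr with i
        exact norm_sq_diag_le i
    _ ≤ ∑ i, ∑ k, ‖U k i‖ ^ 2 * (‖g k‖ ^ 2) ^ p := by
        gcongr with i
        exact Real.rpow_arith_mean_le_arith_mean_rpow Finset.univ (fun k ↦ ‖U k i‖ ^ 2)
          (fun k ↦ ‖g k‖ ^ 2) (fun _ _ ↦ by positivity)
          (sum_norm_sq_col_unitary U i) (fun _ _ ↦ by positivity) hp
    _ = ∑ k, (‖g k‖ ^ 2) ^ p := by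
        rw [Finset.sum_comm]
        simp only [← Finset.sum_mul, sum_norm_sq_row_unitary, one_mul]

theorem diagonal (g : n → ℂ) {p : ℝ} (hp : 0 < p) :
    QRDiagBound (diagonal g) p (∑ i, (‖g i‖ ^ 2) ^ p) := by
  obtain ⟨k, hk⟩ := pow_unbounded_of_one_lt (1 / p) one_lt_two
  replace hk : 1 ≤ 2 ^ k * p := ((div_lt_iff₀ hp).1 hk).le
  induction k generalizing g p with
  | zero => exact diagonal_of_one_le g (by simpa using hk)
  | succ k ih =>
    choose r hr using fun i ↦ IsAlgClosed.exists_pow_nat_eq (g i) two_pos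
    have sum_eq : ∑ i, (‖r i‖ ^ 2) ^ (2 * p) = ∑ i, (‖g i‖ ^ 2) ^ p := by
      refine Finset.sum_congr rfl fun i _ ↦ ?_
      rw [← hr, norm_pow, Real.rpow_mul (by positivity), Real.rpow_two]
    have hroot := ih r (p := 2 * p) (by positivity) (by rwa [← mul_assoc, ← pow_succ])
    rw [sum_eq] at hroot
    have hsq : Matrix.diagonal r * Matrix.diagonal r = Matrix.diagonal g := by
      rw [diagonal_mul_diagonal]
      simp only [← sq, hr]
    exact hsq ▸ hroot.mul_self

theorem trace_mpow (X : Matrix n n ℂ) {p : ℝ} (hp : 0 < p) :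
    QRDiagBound X p (mpow (Xᴴ * X) p).trace.re := by
  obtain ⟨U, hU⟩ := exists_unitary_forall_isDiag X
  obtain ⟨V, D, hD, hXU⟩ := exists_eq_unitary_mul_isUpperTriangular (X * (U : Matrix n n ℂ))
  have hdiag : D.IsDiag := hU V D hD hXU
  have hX : X = V * Matrix.diagonal D.diag * (U⁻¹ : unitaryGroup n ℂ) := by
    rw [hdiag.diagonal_diag, ← hXU, Matrix.mul_assoc, ← UnitaryGroup.mul_val, mul_inv_cancel,
      UnitaryGroup.one_val, Matrix.mul_one]
  rw [trace_mpow_conjTranspose_mul_self_of_isDiag hdiag hXU, hX]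
  exact (diagonal D.diag hp).unitary_mul_mul_unitary V U⁻¹

theorem trace_mpow_le {X : Matrix n n ℂ} {p c : ℝ} (hX : QRDiagBound X p c) :
    (mpow (Xᴴ * X) p).trace.re ≤ c := by
  obtain ⟨U, hU⟩ := exists_unitary_forall_isDiag X
  obtain ⟨V, D, hD, hXU, hc⟩ := hX U
  rwa [trace_mpow_conjTranspose_mul_self_of_isDiag (hU V D hD hXU) hXU]

end QRDiagBound

theorem trace_mpow_conjTranspose_mul_self_mul_le {n : Type*} [Fintype n] [DecidableEq n]
    {α z : ℝ} (hα0 : 0 < α) (hα1 : α < 1) (hz : 0 < z) (X Y : Matrix n n ℂ) :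
    (mpow ((X * Y)ᴴ * (X * Y)) z).trace.re ≤
      α * (mpow (Xᴴ * X) (z / α)).trace.re
        + (1 - α) * (mpow (Yᴴ * Y) (z / (1 - α))).trace.re := by
  let _ : LinearOrder n := LinearOrder.lift' _ (Fintype.equivFin n).injective
  have hX := QRDiagBound.trace_mpow X (div_pos hz hα0)
  have hY := QRDiagBound.trace_mpow Y (div_pos hz (sub_pos.2 hα1))
  convert (hX.mul hα0 hα1 hY).trace_mpow_le

theorem Qaz_variational_le_general {n : Type*} [Fintype n] [DecidableEq n] {α z : ℝ}
    (hα0 : 0 < α) (hα1 : α < 1) (hz : 0 < z) {ρ σ a : Matrix n n ℂ}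
    (hρ : ρ.PosSemidef) (hσ : σ.PosSemidef) (ha : a.PosDef) :
    Qaz α z ρ σ ≤
      α * (mpow (mpow a (1 / 2) * mpow ρ (α / z) * mpow a (1 / 2)) (z / α)).trace.re
        + (1 - α) * (mpow ((mpow a (1 / 2))⁻¹ * mpow σ ((1 - α) / z) * (mpow a (1 / 2))⁻¹)
            (z / (1 - α))).trace.re := by
  rw [Qaz, show (1 - α) / (2 * z) = (1 - α) / z / 2 by rw [div_div, mul_comm],
    ← mpow_half_mul_mpow_half hρ, ← mpow_half_mul_mpow_half hσ ((1 - α) / z)]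
  set A := mpow a (1 / 2)
  set P := mpow ρ (α / z / 2)
  set S := mpow σ ((1 - α) / z / 2)
  have hA : Aᴴ = A := isHermitian_mpow a _
  have hP : Pᴴ = P := isHermitian_mpow ρ _
  have hS : Sᴴ = S := isHermitian_mpow σ _
  have hPS : P * A * (A⁻¹ * S) = P * S := by
    rw [Matrix.mul_assoc, mul_nonsing_inv_cancel_left _ _
      ((isUnit_iff_isUnit_det A).1 (isUnit_mpow ha _))]
  have h := trace_mpow_conjTranspose_mul_self_mul_le hα0 hα1 hz (P * A) (A⁻¹ * S)
  rw [hPS, trace_mpow_conjTranspose_mul_self_comm (A⁻¹ * S)] at h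
  simpa only [conjTranspose_mul, conjTranspose_nonsing_inv, hA, hP, hS, Matrix.mul_assoc] using h

/-- Variational upper bound on `Q_{α,z}` for `0 < α < 1`, `z > 0`:
for every positive definite `a`,
`Q_{α,z}(ρ‖σ) ≤ α Tr((a^{1/2} ρ^{α/z} a^{1/2})^{z/α})
               + (1−α) Tr((a^{−1/2} σ^{(1−α)/z} a^{−1/2})^{z/(1−α)})`. -/
theorem Qaz_variational_le (n : ℕ) (α z : ℝ) (hα0 : 0 < α) (hα1 : α < 1) (hz : 0 < z)
    (ρ σ : Matrix (Fin n) (Fin n) ℂ) (hρ : ρ.PosSemidef) (hσ : σ.PosSemidef)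
    (a : Matrix (Fin n) (Fin n) ℂ) (ha : a.PosDef) :
    Qaz α z ρ σ ≤
      α * ((mpow (mpow a (1 / 2) * mpow ρ (α / z) * mpow a (1 / 2)) (z / α)).trace).re
        + (1 - α) * ((mpow ((mpow a (1 / 2))⁻¹ * mpow σ ((1 - α) / z) * (mpow a (1 / 2))⁻¹)
            (z / (1 - α))).trace).re :=
  Qaz_variational_le_general hα0 hα1 hz hρ hσ ha
end
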